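/- arXiv:0812.2126 — 2 statements merged into one kernel-verified Lean document; each statement's English description precedes it below -/
import Mathlib

section
/- A d-web of hypersurfaces ⟨ω₁, …, ω_d⟩ on U is geodesic for a torsion-free affine connection Γ if and only if there exist smooth 1-forms θ₁, …, θ_d on U such that d^s_Γ ωᵢ = θᵢ·ωᵢ for every i = 1, …, d. -/
open scoped BigOperators

/-- Partial derivative in the `i`-th coordinate direction. -/
noncomputable def pd {n : ℕ} (i : Fin n) (f : (Fin n → ℝ) → ℝ) (x : Fin n → ℝ) : ℝ :=
  fderiv ℝ f x (Pi.single i 1)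

/-- A torsion-free affine connection on `U`, given by its Christoffel symbols `Γ k i j`
(smooth on `U` and symmetric in the lower indices `i j`). -/
def IsTorsionFreeConn {n : ℕ} (U : Set (Fin n → ℝ))
    (Γ : Fin n → Fin n → Fin n → (Fin n → ℝ) → ℝ) : Prop :=
  (∀ k i j, ContDiffOn ℝ (⊤ : ℕ∞) (Γ k i j) U) ∧ (∀ k i j x, Γ k i j x = Γ k j i x)

/-- `γ` is a geodesic of `Γ` on the set `I ⊆ ℝ`, with image in `U`. -/
def IsGeodesicOn {n : ℕ} (U : Set (Fin n → ℝ))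
    (Γ : Fin n → Fin n → Fin n → (Fin n → ℝ) → ℝ)
    (I : Set ℝ) (γ : ℝ → Fin n → ℝ) : Prop :=
  (∀ t ∈ I, γ t ∈ U) ∧ ContDiffOn ℝ 2 γ I ∧
    ∀ t ∈ I, ∀ k, deriv (fun s => deriv (fun u => γ u k) s) t +
      ∑ i, ∑ j, Γ k i j (γ t) * deriv (fun u => γ u i) t * deriv (fun u => γ u j) t = 0

/-- The codimension-one foliation defined by the `1`-form `ω` is totally geodesic for `Γ`:
every geodesic tangent to a leaf at time `0` stays tangent to the kernel of `ω`. -/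
def TotallyGeodesic {n : ℕ} (U : Set (Fin n → ℝ))
    (Γ : Fin n → Fin n → Fin n → (Fin n → ℝ) → ℝ)
    (ω : (Fin n → ℝ) → Fin n → ℝ) : Prop :=
  ∀ I : Set ℝ, IsOpen I → I.OrdConnected → (0 : ℝ) ∈ I →
    ∀ γ : ℝ → Fin n → ℝ, IsGeodesicOn U Γ I γ →
      (∑ k, ω (γ 0) k * deriv (fun u => γ u k) 0) = 0 →
      ∀ t ∈ I, (∑ k, ω (γ t) k * deriv (fun u => γ u k) t) = 0

/-- `ω` is a smooth nonvanishing `1`-form on `U` satisfying the integrability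
condition `ω ∧ dω = 0`. -/
def IsFoliationForm {n : ℕ} (U : Set (Fin n → ℝ)) (ω : (Fin n → ℝ) → Fin n → ℝ) : Prop :=
  ContDiffOn ℝ (⊤ : ℕ∞) ω U ∧ (∀ x ∈ U, ω x ≠ 0) ∧
    ∀ x ∈ U, ∀ i j k,
      ω x i * (pd j (fun y => ω y k) x - pd k (fun y => ω y j) x) +
      ω x j * (pd k (fun y => ω y i) x - pd i (fun y => ω y k) x) +
      ω x k * (pd i (fun y => ω y j) x - pd j (fun y => ω y i) x) = 0

/-- Components of the symmetric covariant differential `d^s_Γ ω`. -/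
noncomputable def dsym {n : ℕ} (Γ : Fin n → Fin n → Fin n → (Fin n → ℝ) → ℝ)
    (ω : (Fin n → ℝ) → Fin n → ℝ) (i j : Fin n) (x : Fin n → ℝ) : ℝ :=
  (pd i (fun y => ω y j) x + pd j (fun y => ω y i) x) / 2 - ∑ k, Γ k i j x * ω x k

/-- Components of the symmetric product `θ·ω` of two `1`-forms. -/
noncomputable def symProd {n : ℕ} (θ ω : (Fin n → ℝ) → Fin n → ℝ) (i j : Fin n) (x : Fin n → ℝ) : ℝ :=
  (θ x i * ω x j + θ x j * ω x i) / 2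

/-- A `d`-web of hypersurfaces on `U`: a family of smooth nonvanishing integrable `1`-forms,
any `n` of which are linearly independent at every point of `U`. -/
def IsWeb {n d : ℕ} (U : Set (Fin n → ℝ)) (ωs : Fin d → (Fin n → ℝ) → Fin n → ℝ) : Prop :=
  (∀ i, IsFoliationForm U (ωs i)) ∧
    ∀ x ∈ U, ∀ σ : Fin n → Fin d, Function.Injective σ →
      LinearIndependent ℝ (fun i => ωs (σ i) x)

/-- `Γ` and `Γ'` are projectively equivalent on `U`:
`Γ'ᵏᵢⱼ = Γᵏᵢⱼ + δᵏᵢ ρⱼ + δᵏⱼ ρᵢ` for some smooth `1`-form `ρ`. -/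
def ProjEquiv {n : ℕ} (U : Set (Fin n → ℝ))
    (Γ Γ' : Fin n → Fin n → Fin n → (Fin n → ℝ) → ℝ) : Prop :=
  ∃ ρ : (Fin n → ℝ) → Fin n → ℝ, ContDiffOn ℝ (⊤ : ℕ∞) ρ U ∧
    ∀ x ∈ U, ∀ k i j, Γ' k i j x =
      Γ k i j x + (if k = i then ρ x j else 0) + (if k = j then ρ x i else 0)

/-- `X` is the frame of vector fields dual to the coframe `ωs` on `U`. -/
def IsDualFrame {n : ℕ} (U : Set (Fin n → ℝ)) (ωs : Fin n → (Fin n → ℝ) → Fin n → ℝ)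
    (X : Fin n → (Fin n → ℝ) → Fin n → ℝ) : Prop :=
  (∀ i, ContDiffOn ℝ (⊤ : ℕ∞) (X i) U) ∧
    ∀ x ∈ U, ∀ i j, (∑ k, ωs i x k * X j x k) = if i = j then 1 else 0

/-- The web invariants `s^a_{ij} = (1/(aᵢ−aⱼ))·(aᵢ ∂ⱼ − aⱼ ∂ᵢ) log (aⱼ/aᵢ)`, where `∂ᵢ`
is derivation along the frame vector field `X i`. -/
noncomputable def sInv {n : ℕ} (X : Fin n → (Fin n → ℝ) → Fin n → ℝ)
    (a : Fin n → (Fin n → ℝ) → ℝ) (i j : Fin n) (x : Fin n → ℝ) : ℝ :=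
  (1 / (a i x - a j x)) *
    (a i x * (fderiv ℝ (a j) x (X j x) / a j x - fderiv ℝ (a i) x (X j x) / a i x) -
     a j x * (fderiv ℝ (a j) x (X i x) / a j x - fderiv ℝ (a i) x (X i x) / a i x))

/-- The curvature tensor `Rᵏₗᵢⱼ` of the connection `Γ`. -/
noncomputable def curv {n : ℕ} (Γ : Fin n → Fin n → Fin n → (Fin n → ℝ) → ℝ)
    (k l i j : Fin n) (x : Fin n → ℝ) : ℝ :=
  pd i (Γ k j l) x - pd j (Γ k i l) x +
    ∑ m, (Γ k i m x * Γ m j l x - Γ k j m x * Γ m i l x)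

/-!
Along a geodesic `γ` with velocity `v`, the connection terms of `d^s_Γ ω` account exactly for the
acceleration, so that `d/dt ω(v) = (d^s_Γ ω)(v, v)`. If `d^s_Γ ω = θ·ω`, this is the linear
equation `d/dt ω(v) = θ(v) ω(v)`, and `ω(v)` vanishes identically once it vanishes at one time.
Conversely, the geodesics issuing from a point in the directions of `ker ω` show that `d^s_Γ ω` is
zero on the diagonal of `ker ω`, and a symmetric bilinear form with this property is divisible
by `ω`; the quotient is given by an explicit formula, hence is as regular as `d^s_Γ ω`.
-/

section SymmetricForms

variable {R M : Type*} [CommRing R] [AddCommGroup M] [Module R M]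

/-- The quotient `θ` of a symmetric bilinear form `B` by a linear form `φ` with `φ e = 1`,
normalized so that `2 B(u, v) = θ(u) φ(v) + θ(v) φ(u)` when `B` is divisible by `φ`; this is
`B = θ·φ` without dividing by `2`. -/
def symQuotient (B : LinearMap.BilinForm R M) (φ : Module.Dual R M) (e : M) : Module.Dual R M :=
  (2 : R) • B e - B e e • φ

theorem two_mul_apply_eq_symQuotient {B : LinearMap.BilinForm R M} (hB : B.IsSymm)
    {φ : Module.Dual R M} {e : M} (he : φ e = 1) (hker : ∀ v, φ v = 0 → B v v = 0) (u v : M) :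
    2 * B u v = symQuotient B φ e u * φ v + symQuotient B φ e v * φ u := by
  have hproj : ∀ w, φ (w - φ w • e) = 0 := fun w => by simp [he]
  have hpolar : B (u - φ u • e) (v - φ v • e) + B (v - φ v • e) (u - φ u • e) = 0 := by
    have hadd := hker _ (by rw [map_add, hproj u, hproj v, add_zero] :
      φ ((u - φ u • e) + (v - φ v • e)) = 0)
    simpa only [map_add B, map_add (B _), LinearMap.add_apply, hker _ (hproj u),
      hker _ (hproj v), zero_add, add_zero] using hadd
  simp only [map_sub, map_smul, LinearMap.sub_apply, LinearMap.smul_apply, smul_eq_mul,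
    hB.eq v u, hB.eq u e, hB.eq v e] at hpolar
  simp only [symQuotient, LinearMap.sub_apply, LinearMap.smul_apply, smul_eq_mul]
  linear_combination hpolar

end SymmetricForms

section Calculus

variable {ι E : Type*} [Fintype ι] [NormedAddCommGroup E] [NormedSpace ℝ E]

theorem hasDerivAt_dotProduct {f g : ℝ → ι → ℝ} {f' g' : ι → ℝ} {t : ℝ}
    (hf : HasDerivAt f f' t) (hg : HasDerivAt g g' t) :
    HasDerivAt (fun s => f s ⬝ᵥ g s) (f' ⬝ᵥ g t + f t ⬝ᵥ g') t := by
  have hsum := HasDerivAt.fun_sum (u := Finset.univ) fun k _ =>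
    (hasDerivAt_pi.1 hf k).mul (hasDerivAt_pi.1 hg k)
  exact hsum.congr_deriv Finset.sum_add_distrib

theorem contDiffOn_dotProduct {m : WithTop ℕ∞} {s : Set E} {f g : E → ι → ℝ}
    (hf : ContDiffOn ℝ m f s) (hg : ContDiffOn ℝ m g s) :
    ContDiffOn ℝ m (fun x => f x ⬝ᵥ g x) s :=
  ContDiffOn.sum fun i _ => (contDiffOn_pi.1 hf i).mul (contDiffOn_pi.1 hg i)

theorem eq_zero_of_hasDerivAt_smul_self {I : Set ℝ} (hI : IsOpen I) (hIc : I.OrdConnected)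
    {a : ℝ → ℝ} {f : ℝ → E} (ha : ContinuousOn a I)
    (hf : ∀ t ∈ I, HasDerivAt f (a t • f t) t) {t₀ t : ℝ} (ht₀ : t₀ ∈ I) (hf₀ : f t₀ = 0)
    (ht : t ∈ I) : f t = 0 := by
  have hA : ∀ s ∈ I, HasDerivAt (fun u => ∫ x in t₀..u, a x) (a s) s := fun s hs =>
    intervalIntegral.integral_hasDerivAt_right
      (ha.mono (hIc.uIcc_subset ht₀ hs)).intervalIntegrable
      (ha.stronglyMeasurableAtFilter hI s hs) (ha.continuousAt (hI.mem_nhds hs))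
  have hderiv : ∀ s ∈ I, HasDerivAt (fun u => Real.exp (-∫ x in t₀..u, a x) • f u) 0 s := by
    intro s hs
    refine ((hA s hs).neg.exp.smul (hf s hs)).congr_deriv ?_
    simp only [Pi.neg_apply, mul_neg, neg_smul, mul_smul, add_neg_cancel]
  have hconst := hI.is_const_of_deriv_eq_zero hIc.isPreconnected
    (fun s hs => (hderiv s hs).differentiableAt.differentiableWithinAt)
    (fun s hs => (hderiv s hs).deriv) ht ht₀
  simpa [hf₀, Real.exp_ne_zero] using hconst

end Calculus

section Geodesics

variable {n : ℕ} {U : Set (Fin n → ℝ)} {Γ : Fin n → Fin n → Fin n → (Fin n → ℝ) → ℝ}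
  {I : Set ℝ} {γ : ℝ → Fin n → ℝ}

/-- The vector `Γᵏᵢⱼ uⁱ vʲ`, in terms of which the geodesic equation is `γ̈ = -Γ(γ̇, γ̇)`. -/
def christoffel (Γ : Fin n → Fin n → Fin n → (Fin n → ℝ) → ℝ) (x u v : Fin n → ℝ) : Fin n → ℝ :=
  fun k => ∑ i, ∑ j, Γ k i j x * u i * v j

/-- The velocity `γ̇`, computed componentwise as in `IsGeodesicOn` and `TotallyGeodesic`. -/
noncomputable def velocity (γ : ℝ → Fin n → ℝ) (t : ℝ) : Fin n → ℝ :=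
  fun k => deriv (fun s => γ s k) t

theorem velocity_eq_of_hasDerivAt {v : Fin n → ℝ} {t : ℝ} (h : HasDerivAt γ v t) :
    velocity γ t = v :=
  funext fun k => (hasDerivAt_pi.1 h k).deriv

theorem contDiffOn_christoffel {E : Type*} [NormedAddCommGroup E] [NormedSpace ℝ E]
    {m : WithTop ℕ∞} (hΓ : ∀ k i j, ContDiffOn ℝ m (Γ k i j) U) {s : Set E}
    {f u v : E → Fin n → ℝ} (hf : ContDiffOn ℝ m f s) (hfU : Set.MapsTo f s U)
    (hu : ContDiffOn ℝ m u s) (hv : ContDiffOn ℝ m v s) :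
    ContDiffOn ℝ m (fun z => christoffel Γ (f z) (u z) (v z)) s :=
  contDiffOn_pi.2 fun k => ContDiffOn.sum fun i _ => ContDiffOn.sum fun j _ =>
    (((hΓ k i j).comp hf hfU).mul (contDiffOn_pi.1 hu i)).mul (contDiffOn_pi.1 hv j)

namespace IsGeodesicOn

theorem contDiffOn_velocity (hγ : IsGeodesicOn U Γ I γ) (hI : IsOpen I) :
    ContDiffOn ℝ 1 (velocity γ) I :=
  contDiffOn_pi.2 fun k => (contDiffOn_pi.1 hγ.2.1 k).deriv_of_isOpen hI one_add_one_eq_two.le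

theorem hasDerivAt (hγ : IsGeodesicOn U Γ I γ) (hI : IsOpen I) {t : ℝ} (ht : t ∈ I) :
    HasDerivAt γ (velocity γ t) t := by
  have h := ((hγ.2.1.contDiffAt (hI.mem_nhds ht)).differentiableAt two_ne_zero).hasDerivAt
  rwa [velocity_eq_of_hasDerivAt h]

theorem hasDerivAt_velocity (hγ : IsGeodesicOn U Γ I γ) (hI : IsOpen I) {t : ℝ} (ht : t ∈ I) :
    HasDerivAt (velocity γ) (-christoffel Γ (γ t) (velocity γ t) (velocity γ t)) t := by
  have h := ((hγ.contDiffOn_velocity hI).contDiffAt (hI.mem_nhds ht)).differentiableAt one_ne_zero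
  refine hasDerivAt_pi.2 fun k => ((differentiableAt_pi.1 h k).hasDerivAt).congr_deriv ?_
  exact eq_neg_of_add_eq_zero_left (hγ.2.2 t ht k)

theorem of_hasDerivAt (hI : IsOpen I) (hΓ : ∀ k i j, ContinuousOn (Γ k i j) U)
    {v : ℝ → Fin n → ℝ} (hU : Set.MapsTo γ I U) (hγ : ∀ t ∈ I, HasDerivAt γ (v t) t)
    (hv : ∀ t ∈ I, HasDerivAt v (-christoffel Γ (γ t) (v t) (v t)) t) :
    IsGeodesicOn U Γ I γ := by
  have hγc : ContDiffOn ℝ 0 γ I := contDiffOn_zero.2 (HasDerivAt.continuousOn hγ)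
  have hvc : ContDiffOn ℝ 0 v I := contDiffOn_zero.2 (HasDerivAt.continuousOn hv)
  have hv₁ : ContDiffOn ℝ (0 + 1) v I := by
    refine (contDiffOn_succ_iff_deriv_of_isOpen hI).2
      ⟨fun t ht => (hv t ht).differentiableAt.differentiableWithinAt, by simp, ?_⟩
    exact (contDiffOn_christoffel (fun k i j => contDiffOn_zero.2 (hΓ k i j)) hγc hU hvc
      hvc).neg.congr fun t ht => (hv t ht).deriv
  have hγ₂ : ContDiffOn ℝ (1 + 1) γ I :=
    (contDiffOn_succ_iff_deriv_of_isOpen hI).2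
      ⟨fun t ht => (hγ t ht).differentiableAt.differentiableWithinAt, by simp,
        (zero_add (1 : WithTop ℕ∞) ▸ hv₁).congr fun t ht => (hγ t ht).deriv⟩
  refine ⟨hU, one_add_one_eq_two (R := WithTop ℕ∞) ▸ hγ₂, fun t ht k => ?_⟩
  have hvel : ∀ s ∈ I, velocity γ s = v s := fun s hs => velocity_eq_of_hasDerivAt (hγ s hs)
  have hacc : HasDerivAt (velocity γ) (-christoffel Γ (γ t) (v t) (v t)) t :=
    (hv t ht).congr_of_eventuallyEq (Set.EqOn.eventuallyEq_of_mem hvel (hI.mem_nhds ht))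
  rw [← hvel t ht] at hacc
  exact eq_neg_iff_add_eq_zero.1 (hasDerivAt_pi.1 hacc k).deriv

end IsGeodesicOn

theorem exists_isGeodesicOn (hU : IsOpen U) (hΓ : ∀ k i j, ContDiffOn ℝ 1 (Γ k i j) U)
    (t₀ : ℝ) {x : Fin n → ℝ} (hx : x ∈ U) (v : Fin n → ℝ) :
    ∃ ε > 0, ∃ γ : ℝ → Fin n → ℝ, IsGeodesicOn U Γ (Set.Ioo (t₀ - ε) (t₀ + ε)) γ ∧
      γ t₀ = x ∧ velocity γ t₀ = v := by
  let field : (Fin n → ℝ) × (Fin n → ℝ) → (Fin n → ℝ) × (Fin n → ℝ) :=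
    fun z => (z.2, -christoffel Γ z.1 z.2 z.2)
  have hfield : ContDiffOn ℝ 1 field (Prod.fst ⁻¹' U) :=
    contDiffOn_snd.prodMk (contDiffOn_christoffel hΓ contDiffOn_fst (Set.mapsTo_preimage _ _)
      contDiffOn_snd contDiffOn_snd).neg
  have hnhds : Prod.fst ⁻¹' U ∈ nhds (x, v) := (hU.preimage continuous_fst).mem_nhds hx
  obtain ⟨α, hα₀, δ, hδ, hα⟩ :=
    (hfield.contDiffAt hnhds).exists_forall_mem_closedBall_exists_eq_forall_mem_Ioo_hasDerivAt₀ t₀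
  have ht₀ : t₀ ∈ Set.Ioo (t₀ - δ) (t₀ + δ) := by constructor <;> linarith
  have hev : ∀ᶠ t in nhds t₀, α t ∈ Prod.fst ⁻¹' U ∧ t ∈ Set.Ioo (t₀ - δ) (t₀ + δ) :=
    ((hα t₀ ht₀).continuousAt.eventually_mem (hα₀ ▸ hnhds)).and (isOpen_Ioo.mem_nhds ht₀)
  obtain ⟨ε, hε, hεball⟩ := Metric.eventually_nhds_iff_ball.1 hev
  rw [Real.ball_eq_Ioo] at hεball
  have hder : ∀ t ∈ Set.Ioo (t₀ - ε) (t₀ + ε), HasDerivAt α (field (α t)) t := fun t ht =>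
    hα t (hεball t ht).2
  refine ⟨ε, hε, fun t => (α t).1, ?_, congrArg Prod.fst hα₀, ?_⟩
  · exact .of_hasDerivAt isOpen_Ioo (fun k i j => (hΓ k i j).continuousOn)
      (fun t ht => (hεball t ht).1) (fun t ht => (hder t ht).fst) (fun t ht => (hder t ht).snd)
  · rw [velocity_eq_of_hasDerivAt (hα t₀ ht₀).fst, hα₀]

end Geodesics

section SymmetricDifferential

variable {n : ℕ} {U : Set (Fin n → ℝ)} {Γ : Fin n → Fin n → Fin n → (Fin n → ℝ) → ℝ}
  {ω θ : (Fin n → ℝ) → Fin n → ℝ} {x : Fin n → ℝ} {m : WithTop ℕ∞}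

/-- The symmetric covariant differential `d^s_Γ ω` at `x` as a bilinear form on tangent
vectors. -/
noncomputable def dsymForm (Γ : Fin n → Fin n → Fin n → (Fin n → ℝ) → ℝ)
    (ω : (Fin n → ℝ) → Fin n → ℝ) (x : Fin n → ℝ) : LinearMap.BilinForm ℝ (Fin n → ℝ) :=
  Matrix.toBilin' (Matrix.of fun p q => dsym Γ ω p q x)

theorem isSymm_dsymForm (hΓ : ∀ k i j, Γ k i j x = Γ k j i x) : (dsymForm Γ ω x).IsSymm := by
  refine Matrix.isSymm_toBilin'_iff_isSymm.2 (Matrix.IsSymm.ext fun p q => ?_)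
  simp only [Matrix.of_apply, dsym, hΓ _ p q, add_comm (pd p _ x)]

theorem fderiv_dotProduct_eq_sum_pd (hω : DifferentiableAt ℝ ω x) (u v : Fin n → ℝ) :
    fderiv ℝ ω x u ⬝ᵥ v = ∑ p, ∑ q, u p * pd p (fun y => ω y q) x * v q := by
  have hpd : ∀ p q, fderiv ℝ ω x (Pi.single p 1) q = pd p (fun y => ω y q) x := fun p q => by
    rw [pd, fderiv_apply hω q]
    rfl
  rw [Finset.sum_comm, dotProduct]
  conv_lhs => rw [pi_eq_sum_univ' u]
  simp only [map_sum, map_smul, Finset.sum_apply, Pi.smul_apply, smul_eq_mul, hpd,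
    Finset.sum_mul]

theorem dsymForm_apply (hω : DifferentiableAt ℝ ω x) (u v : Fin n → ℝ) :
    dsymForm Γ ω x u v =
      (fderiv ℝ ω x u ⬝ᵥ v + fderiv ℝ ω x v ⬝ᵥ u) / 2 - ω x ⬝ᵥ christoffel Γ x u v := by
  have hchristoffel : ω x ⬝ᵥ christoffel Γ x u v =
      ∑ p, ∑ q, u p * (∑ k, Γ k p q x * ω x k) * v q := by
    simp only [dotProduct, christoffel, Finset.mul_sum, Finset.sum_mul]
    rw [Finset.sum_comm]
    refine Finset.sum_congr rfl fun p _ => ?_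
    rw [Finset.sum_comm]
    exact Finset.sum_congr rfl fun q _ => Finset.sum_congr rfl fun k _ => by ring
  rw [dsymForm, Matrix.toBilin'_apply, hchristoffel, fderiv_dotProduct_eq_sum_pd hω u v,
    fderiv_dotProduct_eq_sum_pd hω v u, Finset.sum_comm (f := fun p q => v p * _ * u q)]
  simp only [← Finset.sum_add_distrib, Finset.sum_div, ← Finset.sum_sub_distrib, dsym,
    Matrix.of_apply]
  exact Finset.sum_congr rfl fun p _ => Finset.sum_congr rfl fun q _ => by ring

theorem dsymForm_self_of_dsym_eq_symProd (h : ∀ p q, dsym Γ ω p q x = symProd θ ω p q x)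
    (v : Fin n → ℝ) : dsymForm Γ ω x v v = (θ x ⬝ᵥ v) * (ω x ⬝ᵥ v) := by
  have hsplit : ∀ p q, v p * symProd θ ω p q x * v q =
      (θ x p * v p * (ω x q * v q) + ω x p * v p * (θ x q * v q)) / 2 := fun p q => by
    rw [symProd]
    ring
  simp only [dsymForm, Matrix.toBilin'_apply, Matrix.of_apply, h, hsplit, ← Finset.sum_div,
    Finset.sum_add_distrib, ← Finset.sum_mul_sum, dotProduct]
  ring

theorem contDiffOn_dsym (hU : IsOpen U) (hΓ : ∀ k i j, ContDiffOn ℝ m (Γ k i j) U)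
    (hω : ContDiffOn ℝ (m + 1) ω U) (p q : Fin n) : ContDiffOn ℝ m (dsym Γ ω p q) U := by
  have hωk := contDiffOn_pi.1 hω
  have hpd : ∀ i k, ContDiffOn ℝ m (pd i fun y => ω y k) U := fun i k =>
    ((hωk k).fderiv_of_isOpen hU le_rfl).clm_apply contDiffOn_const
  exact (((hpd p q).add (hpd q p)).div_const 2).sub
    (ContDiffOn.sum fun k _ => (hΓ k p q).mul ((hωk k).of_le le_self_add))

theorem contDiffOn_dsymForm (hU : IsOpen U) (hΓ : ∀ k i j, ContDiffOn ℝ m (Γ k i j) U)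
    (hω : ContDiffOn ℝ (m + 1) ω U) {X Y : (Fin n → ℝ) → Fin n → ℝ} (hX : ContDiffOn ℝ m X U)
    (hY : ContDiffOn ℝ m Y U) : ContDiffOn ℝ m (fun x => dsymForm Γ ω x (X x) (Y x)) U := by
  simp only [dsymForm, Matrix.toBilin'_apply, Matrix.of_apply]
  exact ContDiffOn.sum fun p _ => ContDiffOn.sum fun q _ =>
    ((contDiffOn_pi.1 hX p).mul (contDiffOn_dsym hU hΓ hω p q)).mul (contDiffOn_pi.1 hY q)

theorem IsGeodesicOn.hasDerivAt_dotProduct_velocity {I : Set ℝ} {γ : ℝ → Fin n → ℝ}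
    (hγ : IsGeodesicOn U Γ I γ) (hI : IsOpen I) {t : ℝ} (ht : t ∈ I)
    (hω : DifferentiableAt ℝ ω (γ t)) :
    HasDerivAt (fun s => ω (γ s) ⬝ᵥ velocity γ s)
      (dsymForm Γ ω (γ t) (velocity γ t) (velocity γ t)) t := by
  refine (hasDerivAt_dotProduct (hω.hasFDerivAt.comp_hasDerivAt t (hγ.hasDerivAt hI ht))
    (hγ.hasDerivAt_velocity hI ht)).congr_deriv ?_
  rw [dsymForm_apply hω, dotProduct_neg, Function.comp_apply]
  ring

end SymmetricDifferential

section TotallyGeodesicFoliations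

variable {n : ℕ} {U : Set (Fin n → ℝ)} {Γ : Fin n → Fin n → Fin n → (Fin n → ℝ) → ℝ}
  {ω θ : (Fin n → ℝ) → Fin n → ℝ}

theorem totallyGeodesic_of_dsym_eq_symProd (hU : IsOpen U) (hω : DifferentiableOn ℝ ω U)
    (hθ : ContinuousOn θ U) (h : ∀ x ∈ U, ∀ p q, dsym Γ ω p q x = symProd θ ω p q x) :
    TotallyGeodesic U Γ ω := by
  intro I hI hIc h0 γ hγ hinit t ht
  have hcoeff : ContinuousOn (fun s => θ (γ s) ⬝ᵥ velocity γ s) I :=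
    contDiffOn_zero.1 (contDiffOn_dotProduct
      (contDiffOn_zero.2 (hθ.comp hγ.2.1.continuousOn hγ.1))
      ((hγ.contDiffOn_velocity hI).of_le zero_le_one))
  refine eq_zero_of_hasDerivAt_smul_self (f := fun s => ω (γ s) ⬝ᵥ velocity γ s) hI hIc hcoeff
    (fun s hs => ?_) h0 hinit ht
  refine (hγ.hasDerivAt_dotProduct_velocity hI hs
    (hω.differentiableAt (hU.mem_nhds (hγ.1 s hs)))).congr_deriv ?_
  exact dsymForm_self_of_dsym_eq_symProd (h _ (hγ.1 s hs)) _

theorem TotallyGeodesic.dsymForm_self_eq_zero (hgeo : TotallyGeodesic U Γ ω) (hU : IsOpen U)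
    (hΓ : ∀ k i j, ContDiffOn ℝ 1 (Γ k i j) U) {x : Fin n → ℝ} (hx : x ∈ U)
    (hω : DifferentiableAt ℝ ω x) {v : Fin n → ℝ} (hv : ω x ⬝ᵥ v = 0) :
    dsymForm Γ ω x v v = 0 := by
  obtain ⟨ε, hε, γ, hγ, rfl, rfl⟩ := exists_isGeodesicOn hU hΓ 0 hx v
  have h0 : (0 : ℝ) ∈ Set.Ioo (0 - ε) (0 + ε) := by constructor <;> linarith
  have hzero : ∀ t ∈ Set.Ioo (0 - ε) (0 + ε), ω (γ t) ⬝ᵥ velocity γ t = 0 :=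
    hgeo _ isOpen_Ioo Set.ordConnected_Ioo h0 γ hγ hv
  exact (hγ.hasDerivAt_dotProduct_velocity isOpen_Ioo h0 hω).unique
    ((hasDerivAt_const (0 : ℝ) (0 : ℝ)).congr_of_eventuallyEq
      (Set.EqOn.eventuallyEq_of_mem hzero (isOpen_Ioo.mem_nhds h0)))

/-- The 1-form `θ` with `d^s_Γ ω = θ·ω` for a totally geodesic foliation `ω`. The vector field
required by `symQuotient` is the Euclidean dual of `ω`, scaled to pair to `1` with `ω`. -/
noncomputable def dsymQuotient (Γ : Fin n → Fin n → Fin n → (Fin n → ℝ) → ℝ)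
    (ω : (Fin n → ℝ) → Fin n → ℝ) (x : Fin n → ℝ) (p : Fin n) : ℝ :=
  symQuotient (dsymForm Γ ω x) (dotProductEquiv ℝ (Fin n) (ω x))
    ((ω x ⬝ᵥ ω x)⁻¹ • ω x) (Pi.single p 1)

theorem contDiffOn_dsymQuotient {m : WithTop ℕ∞} (hU : IsOpen U)
    (hΓ : ∀ k i j, ContDiffOn ℝ m (Γ k i j) U) (hω : ContDiffOn ℝ (m + 1) ω U)
    (hω₀ : ∀ x ∈ U, ω x ≠ 0) : ContDiffOn ℝ m (dsymQuotient Γ ω) U := by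
  have hωm : ContDiffOn ℝ m ω U := hω.of_le le_self_add
  have hdual : ContDiffOn ℝ m (fun x => (ω x ⬝ᵥ ω x)⁻¹ • ω x) U :=
    ((contDiffOn_dotProduct hωm hωm).inv fun x hx =>
      dotProduct_self_eq_zero.not.2 (hω₀ x hx)).smul hωm
  refine contDiffOn_pi.2 fun p => ?_
  exact (contDiffOn_const.mul (contDiffOn_dsymForm hU hΓ hω hdual contDiffOn_const)).sub
    ((contDiffOn_dsymForm hU hΓ hω hdual hdual).mul (contDiffOn_dotProduct hωm contDiffOn_const))

theorem TotallyGeodesic.dsym_eq_symProd_dsymQuotient (hgeo : TotallyGeodesic U Γ ω)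
    (hU : IsOpen U) (hΓ : ∀ k i j, ContDiffOn ℝ 1 (Γ k i j) U) {x : Fin n → ℝ} (hx : x ∈ U)
    (hΓsymm : ∀ k i j, Γ k i j x = Γ k j i x) (hω : DifferentiableAt ℝ ω x) (hω₀ : ω x ≠ 0)
    (p q : Fin n) : dsym Γ ω p q x = symProd (dsymQuotient Γ ω) ω p q x := by
  have hdual : dotProductEquiv ℝ (Fin n) (ω x) ((ω x ⬝ᵥ ω x)⁻¹ • ω x) = 1 := by
    rw [dotProductEquiv_apply_apply, dotProduct_smul, smul_eq_mul,
      inv_mul_cancel₀ (dotProduct_self_eq_zero.not.2 hω₀)]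
  have hdiv := two_mul_apply_eq_symQuotient (isSymm_dsymForm hΓsymm) hdual
    (fun v hv => hgeo.dsymForm_self_eq_zero hU hΓ hx hω hv) (Pi.single p 1) (Pi.single q 1)
  simp only [dsymForm, Matrix.toBilin'_single, Matrix.of_apply, dotProductEquiv_apply_apply,
    dotProduct_single_one] at hdiv
  rw [symProd, eq_div_iff two_ne_zero, mul_comm]
  exact hdiv

theorem statement1_general {ι : Type*} {m : WithTop ℕ∞} (hm : 1 ≤ m) (hU : IsOpen U)
    {ωs : ι → (Fin n → ℝ) → Fin n → ℝ} (hωs : ∀ i, ContDiffOn ℝ (m + 1) (ωs i) U)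
    (hωs₀ : ∀ i, ∀ x ∈ U, ωs i x ≠ 0) (hΓ : ∀ k i j, ContDiffOn ℝ m (Γ k i j) U)
    (hΓsymm : ∀ x ∈ U, ∀ k i j, Γ k i j x = Γ k j i x) :
    (∀ i, TotallyGeodesic U Γ (ωs i)) ↔
      ∃ θ : ι → (Fin n → ℝ) → Fin n → ℝ,
        ∀ i, ContDiffOn ℝ m (θ i) U ∧
          ∀ x ∈ U, ∀ p q, dsym Γ (ωs i) p q x = symProd (θ i) (ωs i) p q x := by
  have hdiff : ∀ i, DifferentiableOn ℝ (ωs i) U := fun i =>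
    (hωs i).differentiableOn (by simp)
  constructor
  · intro hgeo
    refine ⟨fun i => dsymQuotient Γ (ωs i), fun i =>
      ⟨contDiffOn_dsymQuotient hU hΓ (hωs i) (hωs₀ i), fun x hx => ?_⟩⟩
    exact (hgeo i).dsym_eq_symProd_dsymQuotient hU (fun k i j => (hΓ k i j).of_le hm) hx
      (hΓsymm x hx) ((hdiff i).differentiableAt (hU.mem_nhds hx)) (hωs₀ i x hx)
  · rintro ⟨θ, hθ⟩ i
    exact totallyGeodesic_of_dsym_eq_symProd hU (hdiff i) (hθ i).1.continuousOn (hθ i).2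

end TotallyGeodesicFoliations

/-- a `d`-web `⟨ω₁, …, ω_d⟩` is geodesic for a torsion-free connection `Γ`
iff `d^s_Γ ωᵢ = θᵢ·ωᵢ` for some smooth 1-forms `θ₁, …, θ_d`. -/
theorem statement1 {n d : ℕ} (hn : 2 ≤ n) (U : Set (Fin n → ℝ)) (hU : IsOpen U)
    (hUconn : IsConnected U)
    (ωs : Fin d → (Fin n → ℝ) → Fin n → ℝ) (hweb : IsWeb U ωs)
    (Γ : Fin n → Fin n → Fin n → (Fin n → ℝ) → ℝ) (hΓ : IsTorsionFreeConn U Γ) :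
    (∀ i, TotallyGeodesic U Γ (ωs i)) ↔
      ∃ θ : Fin d → (Fin n → ℝ) → Fin n → ℝ,
        ∀ i, ContDiffOn ℝ (⊤ : ℕ∞) (θ i) U ∧
          ∀ x ∈ U, ∀ p q, dsym Γ (ωs i) p q x = symProd (θ i) (ωs i) p q x :=
  statement1_general (m := (⊤ : ℕ∞)) (by simp) hU (fun i => (hweb.1 i).1)
    (fun i => (hweb.1 i).2.1) hΓ.1 fun x _ k i j => hΓ.2 k i j x
end

section
/- If two torsion-free affine connections Γ and Γ' on U are projectively equivalent, then for every nonvanishing smooth 1-form ω on U with ω ∧ dω = 0, the codimension-one foliation defined by ω is totally geodesic for Γ if and only if it is totally geodesic for Γ'. Moreover, if Γ'ᵏᵢⱼ = Γᵏᵢⱼ + δᵏᵢρⱼ + δᵏⱼρᵢ, then d^s_{Γ'} ω = d^s_Γ ω − 2ρ·ω for every smooth 1-form ω. -/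
open scoped BigOperators

/-!
Projectively equivalent connections have the same unparametrized geodesics. If `γ` is a geodesic of
`Γ`, then with respect to `Γ'` its acceleration is `2 ρ(γ̇) γ̇`, and this tangential acceleration is
removed by a change of parameter `φ` solving `φ'' = -2 ρ(γ̇ ∘ φ) (φ')²`. Such a `φ` is found as the
inverse of a function `τ` with `τ' = exp (∫ 2 ρ(γ̇))`, so it covers the whole interval on which `γ`
is defined. As the velocities of `γ ∘ φ` are nonzero multiples of those of `γ`, the two curves are
tangent to the kernel of `ω` at the same points.
-/

section Calculus

variable {𝕜 E : Type*} [NontriviallyNormedField 𝕜] [NormedAddCommGroup E] [NormedSpace 𝕜 E]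

theorem contDiffOn_succ_of_hasDerivAt {s : Set 𝕜} (hs : IsOpen s) {m : ℕ} {f f' : 𝕜 → E}
    (hf : ∀ x ∈ s, HasDerivAt f (f' x) x) (hf' : ContDiffOn 𝕜 m f' s) :
    ContDiffOn 𝕜 (m + 1) f s :=
  (contDiffOn_succ_iff_deriv_of_isOpen hs).2
    ⟨fun x hx => (hf x hx).differentiableAt.differentiableWithinAt, by simp,
      hf'.congr fun x hx => (hf x hx).deriv⟩

theorem differentiableAt_deriv_of_contDiffAt {f : 𝕜 → E} {t : 𝕜} (hf : ContDiffAt 𝕜 2 f t) :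
    DifferentiableAt 𝕜 (deriv f) t :=
  ((hf.fderiv_right (m := 1) le_rfl).differentiableAt one_ne_zero).clm_apply
    (differentiableAt_const 1)

theorem deriv_deriv_comp {γ : 𝕜 → E} {φ : 𝕜 → 𝕜} {s : 𝕜} (hγ : ContDiffAt 𝕜 2 γ (φ s))
    (hφ : ContDiffAt 𝕜 2 φ s) :
    deriv (deriv (γ ∘ φ)) s =
      deriv (deriv φ) s • deriv γ (φ s) + deriv φ s ^ 2 • deriv (deriv γ) (φ s) := by
  have hderiv : deriv (γ ∘ φ) =ᶠ[nhds s] fun r => deriv φ r • deriv γ (φ r) := by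
    filter_upwards [hφ.continuousAt.eventually (hγ.eventually (by simp)), hφ.eventually (by simp)]
      with r hγr hφr
    exact deriv.scomp r (hγr.differentiableAt two_ne_zero) (hφr.differentiableAt two_ne_zero)
  have hφ' : HasDerivAt φ (deriv φ s) s := (hφ.differentiableAt two_ne_zero).hasDerivAt
  have hγφ : HasDerivAt (fun r => deriv γ (φ r)) (deriv φ s • deriv (deriv γ) (φ s)) s :=
    (differentiableAt_deriv_of_contDiffAt hγ).hasDerivAt.scomp s hφ'
  rw [hderiv.deriv_eq,
    ((differentiableAt_deriv_of_contDiffAt hφ).hasDerivAt.fun_smul hγφ).deriv]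
  module

section Coordinates

variable {ι : Type*} {γ : 𝕜 → ι → 𝕜}

theorem deriv_coord [Finite ι] {t : 𝕜} (hγ : DifferentiableAt 𝕜 γ t) (k : ι) :
    deriv (fun u => γ u k) t = deriv γ t k := by
  cases nonempty_fintype ι
  exact (hasDerivAt_pi.1 hγ.hasDerivAt k).deriv

variable [Fintype ι]

theorem deriv_deriv_coord {t : 𝕜} (hγ : ContDiffAt 𝕜 2 γ t) (k : ι) :
    deriv (fun s => deriv (fun u => γ u k) s) t = deriv (deriv γ) t k := by
  have hcoord : (fun s => deriv (fun u => γ u k) s) =ᶠ[nhds t] fun s => deriv γ s k :=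
    (hγ.eventually (by simp)).mono fun s hs => deriv_coord (hs.differentiableAt two_ne_zero) k
  rw [hcoord.deriv_eq, deriv_coord (differentiableAt_deriv_of_contDiffAt hγ)]

theorem sum_mul_deriv_comp_eq_zero_iff {a : ι → 𝕜} {φ : 𝕜 → 𝕜} {s : 𝕜}
    (hγ : DifferentiableAt 𝕜 γ (φ s)) (hφ : DifferentiableAt 𝕜 φ s) (hφ' : deriv φ s ≠ 0) :
    ∑ k, a k * deriv (fun u => (γ ∘ φ) u k) s = 0 ↔
      ∑ k, a k * deriv (fun u => γ u k) (φ s) = 0 := by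
  have hvel : ∀ k, deriv (fun u => (γ ∘ φ) u k) s = deriv φ s * deriv (fun u => γ u k) (φ s) :=
    fun k => by
      rw [deriv_coord (hγ.comp s hφ), deriv.scomp s hγ hφ, deriv_coord hγ, Pi.smul_apply,
        smul_eq_mul]
  simp_rw [hvel, mul_left_comm _ (deriv φ s), ← Finset.mul_sum, mul_eq_zero, hφ', false_or]

end Coordinates

end Calculus

section Reparametrization

theorem exists_openPartialHomeomorph_of_deriv_ne_zero {𝕜 : Type*} [RCLike 𝕜] {s : Set 𝕜}
    {f : 𝕜 → 𝕜} {m : WithTop ℕ∞} (hm : m ≠ 0) (hs : IsOpen s) (hinj : Set.InjOn f s)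
    (hf : ContDiffOn 𝕜 m f s) (hf' : ∀ x ∈ s, deriv f x ≠ 0) :
    ∃ e : OpenPartialHomeomorph 𝕜 𝕜, e.source = s ∧ ⇑e = f ∧ ContDiffOn 𝕜 m e.symm e.target := by
  have hfAt : ∀ x ∈ s, ContDiffAt 𝕜 m f x := fun x hx => hf.contDiffAt (hs.mem_nhds hx)
  have hopen : IsOpenMap (s.domRestrict f) := isOpenMap_iff_nhds_le.2 fun ⟨x, hx⟩ => by
    have hmap : Filter.map f (nhds x) = nhds (f x) :=
      ((hfAt x hx).hasStrictDerivAt hm).map_nhds_eq (hf' x hx)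
    rw [Set.domRestrict_apply, ← hmap, ← map_nhds_subtype_coe_eq_nhds hx (hs.mem_nhds hx),
      Filter.map_map]
    exact le_rfl
  let e := OpenPartialHomeomorph.ofContinuousOpenRestrict (hinj.toPartialEquiv f s)
    hf.continuousOn hopen hs
  refine ⟨e, rfl, rfl, fun y hy => ContDiffAt.contDiffWithinAt ?_⟩
  have hx : e.symm y ∈ s := e.map_target hy
  exact e.contDiffAt_symm_deriv (hf' _ hx) hy
    ((hfAt _ hx).differentiableAt hm).hasDerivAt (hfAt _ hx)

theorem exists_hasDerivAt_of_continuousOn {E : Type*} [NormedAddCommGroup E] [NormedSpace ℝ E]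
    [CompleteSpace E] {I : Set ℝ} (hI : IsOpen I) (hI' : I.OrdConnected) {f : ℝ → E}
    (hf : ContinuousOn f I) {a : ℝ} (ha : a ∈ I) (c : E) :
    ∃ F : ℝ → E, F a = c ∧ ∀ t ∈ I, HasDerivAt F (f t) t := by
  refine ⟨fun u => c + ∫ s in a..u, f s, by simp, fun t ht => HasDerivAt.const_add c ?_⟩
  exact intervalIntegral.integral_hasDerivAt_right
    (hf.mono (hI'.uIcc_subset ha ht)).intervalIntegrable
    (hf.stronglyMeasurableAtFilter hI t ht) (hf.continuousAt (hI.mem_nhds ht))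

theorem exists_bijOn_deriv_deriv_eq_neg_mul_sq {I : Set ℝ} (hI : IsOpen I)
    (hI' : I.OrdConnected) {a : ℝ} (ha : a ∈ I) {f : ℝ → ℝ} (hf : ContinuousOn f I) :
    ∃ (J : Set ℝ) (φ : ℝ → ℝ), IsOpen J ∧ J.OrdConnected ∧ a ∈ J ∧ φ a = a ∧ Set.BijOn φ J I ∧
      ContDiffOn ℝ 2 φ J ∧ ∀ s ∈ J, deriv φ s ≠ 0 ∧
        deriv (deriv φ) s = -(f (φ s) * deriv φ s ^ 2) := by
  obtain ⟨G, -, hG⟩ := exists_hasDerivAt_of_continuousOn hI hI' hf ha 0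
  have hexp : ContDiffOn ℝ 1 (fun t => Real.exp (G t)) I :=
    (contDiffOn_succ_of_hasDerivAt (m := 0) hI hG (contDiffOn_zero.2 hf)).exp
  obtain ⟨τ, hτa, hτ⟩ := exists_hasDerivAt_of_continuousOn hI hI' hexp.continuousOn ha a
  have hτ2 : ContDiffOn ℝ 2 τ I := contDiffOn_succ_of_hasDerivAt (m := 1) hI hτ hexp
  have hτ_mono : StrictMonoOn τ I := strictMonoOn_of_deriv_pos hI'.convex hτ2.continuousOn
    fun t ht => by rw [(hτ t (interior_subset ht)).deriv]; positivity
  obtain ⟨e, rfl, rfl, he⟩ := exists_openPartialHomeomorph_of_deriv_ne_zero two_ne_zero hI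
    hτ_mono.injOn hτ2 fun t ht => (hτ t ht).deriv ▸ (Real.exp_pos _).ne'
  have hφ : ∀ s ∈ e.target, HasDerivAt e.symm (Real.exp (-G (e.symm s))) s := fun s hs => by
    rw [Real.exp_neg]
    exact e.hasDerivAt_symm hs (Real.exp_ne_zero _) (hτ _ (e.map_target hs))
  refine ⟨e.target, e.symm, e.open_target, ?_, hτa ▸ e.map_source ha, ?_, e.symm.bijOn, he,
    fun s hs => ⟨(hφ s hs).deriv ▸ Real.exp_ne_zero _, ?_⟩⟩
  · rw [← e.image_source_eq_target]
    exact (hI'.isPreconnected.image e e.continuousOn).ordConnected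
  · nth_rw 1 [← hτa, e.left_inv ha]
  · have hφ' : deriv e.symm =ᶠ[nhds s] fun r => Real.exp (-G (e.symm r)) :=
      Filter.eventuallyEq_of_mem (e.open_target.mem_nhds hs) fun r hr => (hφ r hr).deriv
    have hGφ : HasDerivAt (fun r => G (e.symm r)) (f (e.symm s) * Real.exp (-G (e.symm s))) s :=
      (hG _ (e.map_target hs)).comp s (hφ s hs)
    rw [hφ'.deriv_eq, hGφ.fun_neg.exp.deriv, (hφ s hs).deriv]
    ring

end Reparametrization

section Geodesics

variable {n : ℕ} {U : Set (Fin n → ℝ)} {Γ Γ' : Fin n → Fin n → Fin n → (Fin n → ℝ) → ℝ}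
  {ρ : (Fin n → ℝ) → Fin n → ℝ} {I : Set ℝ} {γ : ℝ → Fin n → ℝ}

/-- The vector `Γ(v, v)` at the point `x`; geodesics are the solutions of `γ̈ = -Γ(γ̇, γ̇)`. -/
def christoffelQuad (Γ : Fin n → Fin n → Fin n → (Fin n → ℝ) → ℝ) (x v : Fin n → ℝ) :
    Fin n → ℝ :=
  fun k => ∑ i, ∑ j, Γ k i j x * v i * v j

/-- `Γ'` is the projective change of `Γ` by the `1`-form `ρ`, which need not be smooth. -/
def IsProjChange (U : Set (Fin n → ℝ)) (ρ : (Fin n → ℝ) → Fin n → ℝ)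
    (Γ Γ' : Fin n → Fin n → Fin n → (Fin n → ℝ) → ℝ) : Prop :=
  ∀ x ∈ U, ∀ k i j, Γ' k i j x =
    Γ k i j x + (if k = i then ρ x j else 0) + (if k = j then ρ x i else 0)

theorem christoffelQuad_smul (x v : Fin n → ℝ) (c : ℝ) :
    christoffelQuad Γ x (c • v) = c ^ 2 • christoffelQuad Γ x v := by
  ext k
  simp only [christoffelQuad, Pi.smul_apply, smul_eq_mul, Finset.mul_sum]
  exact Finset.sum_congr rfl fun i _ => Finset.sum_congr rfl fun j _ => by ring

theorem IsProjChange.symm (h : IsProjChange U ρ Γ Γ') : IsProjChange U (-ρ) Γ' Γ := by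
  intro x hx k i j
  rw [h x hx]
  simp only [Pi.neg_apply]
  split_ifs <;> ring

theorem IsProjChange.christoffelQuad_eq (h : IsProjChange U ρ Γ Γ') {x : Fin n → ℝ} (hx : x ∈ U)
    (v : Fin n → ℝ) :
    christoffelQuad Γ' x v = christoffelQuad Γ x v + (2 * (ρ x ⬝ᵥ v)) • v := by
  ext k
  simp only [christoffelQuad, h x hx, add_mul, ite_mul, zero_mul, Finset.sum_add_distrib,
    Finset.sum_ite_eq, Finset.mem_univ, if_true, Finset.sum_ite_irrel, Finset.sum_const_zero,
    Pi.add_apply, Pi.smul_apply, smul_eq_mul, dotProduct, Finset.mul_sum, Finset.sum_mul]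
  rw [add_assoc, ← Finset.sum_add_distrib]
  congr 1
  exact Finset.sum_congr rfl fun i _ => by ring

theorem IsProjChange.dsym_eq (h : IsProjChange U ρ Γ Γ') {x : Fin n → ℝ} (hx : x ∈ U)
    (ω : (Fin n → ℝ) → Fin n → ℝ) (i j : Fin n) :
    dsym Γ' ω i j x = dsym Γ ω i j x - 2 * symProd ρ ω i j x := by
  simp only [dsym, symProd, h x hx, add_mul, ite_mul, zero_mul, Finset.sum_add_distrib,
    Finset.sum_ite_eq', Finset.mem_univ, if_true]
  ring

theorem isGeodesicOn_iff (hI : IsOpen I) :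
    IsGeodesicOn U Γ I γ ↔ Set.MapsTo γ I U ∧ ContDiffOn ℝ 2 γ I ∧
      ∀ t ∈ I, deriv (deriv γ) t = -christoffelQuad Γ (γ t) (deriv γ t) := by
  refine and_congr_right fun _ => and_congr_right fun hγ => forall₂_congr fun t ht => ?_
  have hγt : ContDiffAt ℝ 2 γ t := hγ.contDiffAt (hI.mem_nhds ht)
  simp only [deriv_deriv_coord hγt, deriv_coord (hγt.differentiableAt two_ne_zero),
    eq_neg_iff_add_eq_zero, funext_iff, Pi.add_apply, Pi.zero_apply, christoffelQuad]

theorem IsGeodesicOn.comp_of_isProjChange (h : IsProjChange U ρ Γ Γ') (hI : IsOpen I)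
    (hγ : IsGeodesicOn U Γ I γ) {J : Set ℝ} (hJ : IsOpen J) {φ : ℝ → ℝ} (hφI : Set.MapsTo φ J I)
    (hφ : ContDiffOn ℝ 2 φ J)
    (hφ' : ∀ s ∈ J, deriv (deriv φ) s =
      -(2 * (ρ (γ (φ s)) ⬝ᵥ deriv γ (φ s)) * deriv φ s ^ 2)) :
    IsGeodesicOn U Γ' J (γ ∘ φ) := by
  obtain ⟨hγU, hγ2, hgeo⟩ := (isGeodesicOn_iff hI).1 hγ
  refine (isGeodesicOn_iff hJ).2 ⟨hγU.comp hφI, hγ2.comp hφ hφI, fun s hs => ?_⟩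
  have hφs : ContDiffAt ℝ 2 φ s := hφ.contDiffAt (hJ.mem_nhds hs)
  have hγs : ContDiffAt ℝ 2 γ (φ s) := hγ2.contDiffAt (hI.mem_nhds (hφI hs))
  rw [deriv_deriv_comp hγs hφs, deriv.scomp s (hγs.differentiableAt two_ne_zero)
    (hφs.differentiableAt two_ne_zero), Function.comp_apply, h.christoffelQuad_eq (hγU (hφI hs)),
    hgeo _ (hφI hs), hφ' s hs, christoffelQuad_smul, dotProduct_smul]
  module

theorem IsGeodesicOn.exists_comp_isGeodesicOn (h : IsProjChange U ρ Γ Γ') (hρ : ContinuousOn ρ U)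
    (hI : IsOpen I) (hI' : I.OrdConnected) (hγ : IsGeodesicOn U Γ I γ) {a : ℝ} (ha : a ∈ I) :
    ∃ (J : Set ℝ) (φ : ℝ → ℝ), IsOpen J ∧ J.OrdConnected ∧ a ∈ J ∧ φ a = a ∧ Set.BijOn φ J I ∧
      (∀ s ∈ J, DifferentiableAt ℝ φ s ∧ deriv φ s ≠ 0) ∧ IsGeodesicOn U Γ' J (γ ∘ φ) := by
  have hρ_vel : ContinuousOn (fun t => 2 * (ρ (γ t) ⬝ᵥ deriv γ t)) I :=
    continuousOn_const.mul ((continuous_fst.dotProduct continuous_snd).comp_continuousOn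
      ((hρ.comp hγ.2.1.continuousOn hγ.1).prodMk
        (hγ.2.1.continuousOn_deriv_of_isOpen hI one_le_two)))
  obtain ⟨J, φ, hJ, hJ', haJ, hφa, hbij, hφ, hφ'⟩ :=
    exists_bijOn_deriv_deriv_eq_neg_mul_sq hI hI' ha hρ_vel
  exact ⟨J, φ, hJ, hJ', haJ, hφa, hbij, fun s hs =>
    ⟨(hφ.contDiffAt (hJ.mem_nhds hs)).differentiableAt two_ne_zero, (hφ' s hs).1⟩,
    hγ.comp_of_isProjChange h hI hJ hbij.mapsTo hφ fun s hs => (hφ' s hs).2⟩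

theorem TotallyGeodesic.of_isProjChange {ω : (Fin n → ℝ) → Fin n → ℝ} (hω : TotallyGeodesic U Γ' ω)
    (h : IsProjChange U ρ Γ Γ') (hρ : ContinuousOn ρ U) : TotallyGeodesic U Γ ω := by
  intro I hI hI' h0 γ hγ htan t ht
  obtain ⟨J, φ, hJ, hJ', h0J, hφ0, hbij, hφ, hγφ⟩ := hγ.exists_comp_isGeodesicOn h hρ hI hI' h0
  have htangent : ∀ s ∈ J, ∑ k, ω ((γ ∘ φ) s) k * deriv (fun u => (γ ∘ φ) u k) s = 0 ↔
      ∑ k, ω (γ (φ s)) k * deriv (fun u => γ u k) (φ s) = 0 := fun s hs =>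
    sum_mul_deriv_comp_eq_zero_iff
      ((hγ.2.1.contDiffAt (hI.mem_nhds (hbij.mapsTo hs))).differentiableAt two_ne_zero)
      (hφ s hs).1 (hφ s hs).2
  obtain ⟨s, hs, rfl⟩ := hbij.surjOn ht
  refine (htangent s hs).1 (hω J hJ hJ' h0J _ hγφ ((htangent 0 h0J).2 ?_) s hs)
  rwa [hφ0]

theorem statement3_general :
    (∀ ρ : (Fin n → ℝ) → Fin n → ℝ, ContinuousOn ρ U → IsProjChange U ρ Γ Γ' →
      ∀ ω : (Fin n → ℝ) → Fin n → ℝ, TotallyGeodesic U Γ ω ↔ TotallyGeodesic U Γ' ω) ∧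
    (∀ ρ : (Fin n → ℝ) → Fin n → ℝ, IsProjChange U ρ Γ Γ' →
      ∀ ω : (Fin n → ℝ) → Fin n → ℝ, ∀ x ∈ U, DifferentiableAt ℝ ω x →
        ∀ i j, dsym Γ' ω i j x = dsym Γ ω i j x - 2 * symProd ρ ω i j x) :=
  ⟨fun _ hρ h _ => ⟨fun hω => hω.of_isProjChange h.symm hρ.neg, fun hω => hω.of_isProjChange h hρ⟩,
    fun _ h ω _ hx _ i j => h.dsym_eq hx ω i j⟩

end Geodesics

/-- projectively equivalent torsion-free connections have the same totally
geodesic codimension-one foliations; moreover if `Γ'ᵏᵢⱼ = Γᵏᵢⱼ + δᵏᵢρⱼ + δᵏⱼρᵢ`, then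
`d^s_{Γ'} ω = d^s_Γ ω − 2ρ·ω` for every smooth 1-form `ω`. -/
theorem statement3 {n : ℕ} (hn : 2 ≤ n) (U : Set (Fin n → ℝ)) (hU : IsOpen U)
    (hUconn : IsConnected U)
    (Γ Γ' : Fin n → Fin n → Fin n → (Fin n → ℝ) → ℝ)
    (hΓ : IsTorsionFreeConn U Γ) (hΓ' : IsTorsionFreeConn U Γ')
    (hpe : ProjEquiv U Γ Γ') :
    (∀ ω : (Fin n → ℝ) → Fin n → ℝ, IsFoliationForm U ω →
      (TotallyGeodesic U Γ ω ↔ TotallyGeodesic U Γ' ω)) ∧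
    (∀ ρ : (Fin n → ℝ) → Fin n → ℝ,
      (∀ x ∈ U, ∀ k i j, Γ' k i j x =
        Γ k i j x + (if k = i then ρ x j else 0) + (if k = j then ρ x i else 0)) →
      ∀ ω : (Fin n → ℝ) → Fin n → ℝ, ContDiffOn ℝ (⊤ : ℕ∞) ω U →
        ∀ x ∈ U, ∀ i j, dsym Γ' ω i j x = dsym Γ ω i j x - 2 * symProd ρ ω i j x) := by
  obtain ⟨ρ, hρ, h⟩ := hpe
  exact ⟨fun ω _ => statement3_general.1 ρ hρ.continuousOn h ω, fun σ hσ ω hω x hx =>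
    statement3_general.2 σ hσ ω x hx ((hω.contDiffAt (hU.mem_nhds hx)).differentiableAt (by simp))⟩
end
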